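/- arXiv:1302.5548 — 4 statements merged into one kernel-verified Lean document; each statement's English description precedes it below -/
import Mathlib

section
/- Fix σ > 0, b ∈ ℝ, λ > 0, μ ∈ ℝ and δ > 0, let m(s) := (σ²/2)s² + b·s + λ·(exp(δ²s²/2 + μs) − 1), and for x ∈ ℝ let ŝ(x) denote the unique real solution of m'(s) = x. Define Λ(x) := 2·m(ŝ(x)) / ( ŝ(x)·(ŝ(x) − 1) ) for x large enough that ŝ(x) > 1. Then Λ(x) · (log x)^{3/2} / x → δ/√2 as x → +∞; in particular, for fixed k > 0, setting x = k/T gives Λ(k/T) ∼ (δ/√2)·(k/T)·(log(k/T))^{−3/2} as T → 0⁺. -/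
open Filter Real

/-!
Write `x = m'(ŝ)`. For large `s` the Gaussian jump term dominates both `m` and `m'`, so that
`log m'(s) ~ a s²` and `m(s) ~ m'(s) / (2 a s)` with `a = δ² / 2`. Hence `ŝ ~ √(log x / a)` and
`Λ(x) ~ 2 m(ŝ) / ŝ² ~ x / (a ŝ³) ~ √a · x · (log x)^(-3/2)`, where `√a = δ / √2`.
Convexity of `m` is what sends the saddle point `ŝ(x)` to infinity.
-/

open Asymptotics Set Topology

theorem tendsto_atTop_of_monotone_comp {ι α β : Type*} [LinearOrder α] [Preorder β] [NoMaxOrder β]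
    {l : Filter ι} {f : α → β} {g : ι → α} (hf : Monotone f)
    (hfg : Tendsto (fun i => f (g i)) l atTop) : Tendsto g l atTop :=
  tendsto_atTop.2 fun M =>
    (hfg.eventually (eventually_gt_atTop (f M))).mono fun _ hi => (hf.reflect_lt hi).le

theorem tendsto_const_div_nhdsGT_zero {k : ℝ} (hk : 0 < k) :
    Tendsto (fun T : ℝ => k / T) (𝓝[>] 0) atTop := by
  simpa only [div_eq_mul_inv] using tendsto_inv_nhdsGT_zero.const_mul_atTop hk

theorem tendsto_mul_log_rpow_div_of_isEquivalent {f : ℝ → ℝ} {c r : ℝ}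
    (hf : f ~[atTop] fun x => c * x * log x ^ (-r)) :
    Tendsto (fun x => f x * log x ^ r / x) atTop (𝓝 c) := by
  have hequiv : (fun x => f x * log x ^ r / x) ~[atTop]
      fun x => c * x * log x ^ (-r) * log x ^ r / x :=
    (hf.mul IsEquivalent.refl).div IsEquivalent.refl
  refine (hequiv.congr_right ?_).symm.tendsto_nhds tendsto_const_nhds
  filter_upwards [eventually_gt_atTop 1] with x hx
  have hlog : 0 < log x ^ r := rpow_pos_of_pos (log_pos hx) r
  have hx0 : x ≠ 0 := (zero_lt_one.trans hx).ne'
  rw [rpow_neg (log_pos hx).le]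
  field_simp

theorem tendsto_div_one_of_isEquivalent_mul_log_rpow {f : ℝ → ℝ} {c r : ℝ} (hc : c ≠ 0)
    (hf : f ~[atTop] fun x => c * x * log x ^ r) :
    Tendsto (fun x => f x / (c * x * log x ^ r)) atTop (𝓝 1) := by
  refine (isEquivalent_iff_tendsto_one ?_).1 hf
  filter_upwards [eventually_gt_atTop 1] with x hx
  exact mul_ne_zero (mul_ne_zero hc (zero_lt_one.trans hx).ne')
    (rpow_pos_of_pos (log_pos hx) r).ne'

theorem convexOn_exp_comp {E : Type*} [AddCommGroup E] [Module ℝ E] {t : Set E} {f : E → ℝ}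
    (hf : ConvexOn ℝ t f) : ConvexOn ℝ t fun x => exp (f x) :=
  ⟨hf.1, fun _ hx _ hy _ _ hu hv huv =>
    (exp_le_exp.2 (hf.2 hx hy hu hv huv)).trans
      (convexOn_exp.2 (mem_univ _) (mem_univ _) hu hv huv)⟩

theorem convexOn_const_mul_sq_add_mul {a : ℝ} (ha : 0 ≤ a) (c : ℝ) :
    ConvexOn ℝ univ fun s : ℝ => a * s ^ 2 + c * s :=
  (even_two.convexOn_pow.smul ha).add ((LinearMap.mulLeft ℝ c).convexOn convex_univ)

theorem isEquivalent_sub_const_atTop (c : ℝ) : (fun s : ℝ => s - c) ~[atTop] fun s => s :=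
  IsEquivalent.refl.sub_isLittleO (isLittleO_const_id_atTop c)

theorem sqrt_mul_mul_sq_rpow_neg_three_halves {a s : ℝ} (ha : 0 < a) (hs : 0 < s) :
    √a * (a * s ^ 2) ^ (-(3 : ℝ) / 2) = 1 / (a * s ^ 3) := by
  have hrpow : (a * s ^ 2) ^ (-(3 : ℝ) / 2) = ((√a * s) ^ 3)⁻¹ := by
    rw [← sq_sqrt ha.le, ← mul_pow, sqrt_sq (sqrt_nonneg a), ← rpow_natCast (_ * s) 2,
      ← rpow_mul (by positivity), ← rpow_natCast (_ * s) 3, ← rpow_neg (by positivity)]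
    norm_num
  rw [hrpow]
  field_simp
  rw [sq_sqrt ha.le]

/-- The saddle point approximation `Λ(x) = 2 m(ŝ(x)) / (ŝ(x) (ŝ(x) - 1))` of local variance for a
time-homogeneous cumulant function `m` and a saddle point function `ŝ`. At `ŝ(x) ∈ {0, 1}` its
value is the junk value `0`. -/
noncomputable def saddlePointLocalVar (m sHat : ℝ → ℝ) (x : ℝ) : ℝ :=
  2 * m (sHat x) / (sHat x * (sHat x - 1))

theorem isEquivalent_saddlePointLocalVar {m sHat : ℝ → ℝ} {a : ℝ} (ha : 0 < a)
    (hlog : (fun s => log (deriv m s)) ~[atTop] fun s => a * s ^ 2)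
    (hm : m ~[atTop] fun s => deriv m s / (2 * a * s))
    (hsolve : ∀ᶠ x in atTop, deriv m (sHat x) = x) (hs : Tendsto sHat atTop atTop) :
    saddlePointLocalVar m sHat ~[atTop] fun x => √a * x * log x ^ (-(3 : ℝ) / 2) := by
  have hlog_sHat : (fun x => a * sHat x ^ 2) ~[atTop] log :=
    (hlog.comp_tendsto hs).symm.congr_right (hsolve.mono fun x hx => congrArg log hx)
  have hm_sHat : (fun x => m (sHat x)) ~[atTop] fun x => x / (2 * a * sHat x) :=
    (hm.comp_tendsto hs).congr_right (hsolve.mono fun x hx => by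
      simp only [Function.comp_apply, hx])
  have hden : (fun x => sHat x * (sHat x - 1)) ~[atTop] fun x => sHat x * sHat x :=
    IsEquivalent.refl.mul ((isEquivalent_sub_const_atTop 1).comp_tendsto hs)
  have hrpow : (fun x => (a * sHat x ^ 2) ^ (-(3 : ℝ) / 2)) ~[atTop]
      fun x => log x ^ (-(3 : ℝ) / 2) :=
    (hlog_sHat.symm.rpow fun x => by positivity).symm
  calc
    saddlePointLocalVar m sHat
      ~[atTop] fun x => 2 * (x / (2 * a * sHat x)) / (sHat x * sHat x) :=
        (IsEquivalent.refl.mul hm_sHat).div hden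
    _ =ᶠ[atTop] fun x => √a * x * (a * sHat x ^ 2) ^ (-(3 : ℝ) / 2) := by
        filter_upwards [hs.eventually_gt_atTop 0] with x hx
        rw [mul_right_comm √a, sqrt_mul_mul_sq_rpow_neg_three_halves ha hx]
        field_simp
    _ ~[atTop] fun x => √a * x * log x ^ (-(3 : ℝ) / 2) := IsEquivalent.refl.mul hrpow

/-- The moment generating function of the normal law with mean `μ` and variance `δ ^ 2`. -/
noncomputable def normalMGF (μ δ s : ℝ) : ℝ := exp (δ ^ 2 * s ^ 2 / 2 + μ * s)

/-- The cumulant generating function `m` of the log-price per unit time in the Merton model: the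
log-price has moment generating function `exp (T * m s)` at time `T`. Here `σ` is the diffusion
volatility, `b` the drift and `lam` the intensity of the jumps, whose sizes are normal with mean `μ`
and variance `δ ^ 2`. -/
noncomputable def mertonCumulant (σ b lam μ δ s : ℝ) : ℝ :=
  σ ^ 2 / 2 * s ^ 2 + b * s + lam * (normalMGF μ δ s - 1)

section Merton

variable {σ b lam μ δ : ℝ}

theorem hasDerivAt_normalMGF (s : ℝ) :
    HasDerivAt (normalMGF μ δ) ((δ ^ 2 * s + μ) * normalMGF μ δ s) s := by
  have hquad : HasDerivAt (fun s => δ ^ 2 * s ^ 2 / 2 + μ * s) (δ ^ 2 * s + μ) s := by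
    refine ((((hasDerivAt_pow 2 s).const_mul (δ ^ 2)).div_const 2).add
      ((hasDerivAt_id s).const_mul μ)).congr_deriv ?_
    simp only [Nat.cast_ofNat, Nat.reduceSub]
    ring
  simpa only [normalMGF, mul_comm] using! hquad.exp

theorem hasDerivAt_mertonCumulant (s : ℝ) :
    HasDerivAt (mertonCumulant σ b lam μ δ)
      (σ ^ 2 * s + b + lam * ((δ ^ 2 * s + μ) * normalMGF μ δ s)) s := by
  refine ((((hasDerivAt_pow 2 s).const_mul (σ ^ 2 / 2)).add
    ((hasDerivAt_id s).const_mul b)).add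
      (((hasDerivAt_normalMGF s).sub_const 1).const_mul lam)).congr_deriv ?_
  simp only [Nat.cast_ofNat, Nat.reduceSub]
  ring

theorem convexOn_normalMGF : ConvexOn ℝ univ (normalMGF μ δ) := by
  have hquad : ConvexOn ℝ univ fun s => δ ^ 2 / 2 * s ^ 2 + μ * s :=
    convexOn_const_mul_sq_add_mul (by positivity) μ
  refine (convexOn_exp_comp hquad).congr fun s _ => ?_
  rw [normalMGF, mul_div_right_comm]

theorem convexOn_mertonCumulant (hlam : 0 ≤ lam) :
    ConvexOn ℝ univ (mertonCumulant σ b lam μ δ) :=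
  (convexOn_const_mul_sq_add_mul (by positivity) b).add
    ((convexOn_normalMGF.add_const (-1)).smul hlam)

theorem monotone_deriv_mertonCumulant (hlam : 0 ≤ lam) :
    Monotone (deriv (mertonCumulant σ b lam μ δ)) :=
  monotoneOn_univ.1 <| (convexOn_mertonCumulant hlam).monotoneOn_deriv
    fun s _ => (hasDerivAt_mertonCumulant s).differentiableAt

theorem isLittleO_pow_normalMGF (hδ : δ ≠ 0) (n : ℕ) :
    (fun s : ℝ => s ^ n) =o[atTop] normalMGF μ δ := by
  refine isLittleO_pow_exp_atTop.trans_isBigO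
    (isBigO_exp_comp_exp_comp.2 <| isBoundedUnder_of_eventually_le (a := 0) ?_)
  filter_upwards [eventually_ge_atTop 0, eventually_ge_atTop ((1 - μ) * 2 / δ ^ 2)] with s hs hs'
  rw [div_le_iff₀ (by positivity)] at hs'
  have hexponent : s ≤ δ ^ 2 * s ^ 2 / 2 + μ * s := by
    linear_combination s / 2 * hs'
  exact sub_nonpos.2 hexponent

theorem isEquivalent_mertonCumulant (hlam : lam ≠ 0) (hδ : δ ≠ 0) :
    mertonCumulant σ b lam μ δ ~[atTop] fun s => lam * normalMGF μ δ s := by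
  have hpow (c : ℝ) (n : ℕ) : (fun s => c * s ^ n) =o[atTop] fun s => lam * normalMGF μ δ s :=
    ((isLittleO_pow_normalMGF hδ n).const_mul_left c).const_mul_right hlam
  have hrest := ((hpow (σ ^ 2 / 2) 2).add (hpow b 1)).add (hpow (-lam) 0)
  refine (hrest.add_isEquivalent IsEquivalent.refl).congr_left (.of_forall fun s => ?_)
  simp only [Pi.add_apply, mertonCumulant]
  ring

theorem isEquivalent_deriv_mertonCumulant (hlam : lam ≠ 0) (hδ : δ ≠ 0) :
    deriv (mertonCumulant σ b lam μ δ) ~[atTop] fun s => δ ^ 2 * s * (lam * normalMGF μ δ s) := by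
  have hMGF : normalMGF μ δ =o[atTop] fun s => δ ^ 2 * s * (lam * normalMGF μ δ s) := by
    simpa only [one_mul, id_eq] using
      ((isLittleO_const_id_atTop (1 : ℝ)).const_mul_right (pow_ne_zero 2 hδ)).mul_isBigO
        ((isBigO_refl (normalMGF μ δ) atTop).const_mul_right hlam)
  have hpow (c : ℝ) (n : ℕ) :
      (fun s => c * s ^ n) =o[atTop] fun s => δ ^ 2 * s * (lam * normalMGF μ δ s) :=
    ((isLittleO_pow_normalMGF hδ n).const_mul_left c).trans hMGF
  have hrest := ((hpow (σ ^ 2) 1).add (hpow b 0)).add (hMGF.const_mul_left (lam * μ))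
  refine (hrest.add_isEquivalent IsEquivalent.refl).congr_left (.of_forall fun s => ?_)
  simp only [Pi.add_apply, (hasDerivAt_mertonCumulant s).deriv]
  ring

theorem isEquivalent_mertonCumulant_deriv_div (hlam : lam ≠ 0) (hδ : δ ≠ 0) :
    mertonCumulant σ b lam μ δ ~[atTop]
      fun s => deriv (mertonCumulant σ b lam μ δ) s / (δ ^ 2 * s) := by
  have hderiv : (fun s => deriv (mertonCumulant σ b lam μ δ) s / (δ ^ 2 * s)) ~[atTop]
      fun s => δ ^ 2 * s * (lam * normalMGF μ δ s) / (δ ^ 2 * s) :=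
    (isEquivalent_deriv_mertonCumulant hlam hδ).div IsEquivalent.refl
  refine (isEquivalent_mertonCumulant hlam hδ).trans (hderiv.congr_right ?_).symm
  filter_upwards [eventually_ne_atTop 0] with s hs
  exact mul_div_cancel_left₀ _ (mul_ne_zero (pow_ne_zero 2 hδ) hs)

theorem tendsto_normalMGF_atTop (hδ : δ ≠ 0) : Tendsto (normalMGF μ δ) atTop atTop := by
  have hnorm : Tendsto (fun s => ‖normalMGF μ δ s‖) atTop atTop :=
    (isLittleO_one_left_iff ℝ).1 (by simpa only [pow_zero] using isLittleO_pow_normalMGF hδ 0)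
  exact hnorm.congr fun s => norm_of_nonneg (exp_pos _).le

theorem isEquivalent_log_deriv_mertonCumulant (hlam : 0 < lam) (hδ : δ ≠ 0) :
    (fun s => log (deriv (mertonCumulant σ b lam μ δ) s)) ~[atTop]
      fun s => δ ^ 2 / 2 * s ^ 2 := by
  have hδ2 : 0 < δ ^ 2 := by positivity
  have hleading : Tendsto (fun s => δ ^ 2 * s * (lam * normalMGF μ δ s)) atTop atTop :=
    (tendsto_id.const_mul_atTop hδ2).atTop_mul_atTop₀
      ((tendsto_normalMGF_atTop hδ).const_mul_atTop hlam)
  have hlin : (fun s : ℝ => s) =o[atTop] fun s => δ ^ 2 / 2 * s ^ 2 := by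
    simpa only [pow_one] using
      (isLittleO_pow_pow_atTop_of_lt one_lt_two).const_mul_right (half_pos hδ2).ne'
  have hlower : (fun s => log (δ ^ 2 * lam) + log s + μ * s) =o[atTop]
      fun s => δ ^ 2 / 2 * s ^ 2 :=
    (((isLittleO_const_id_atTop _).trans hlin).add (isLittleO_log_id_atTop.trans hlin)).add
      (hlin.const_mul_left μ)
  refine ((isEquivalent_deriv_mertonCumulant hlam.ne' hδ).log hleading).trans
    ((hlower.add_isEquivalent IsEquivalent.refl).congr_left ?_)
  filter_upwards [eventually_gt_atTop 0] with s hs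
  have hsplit : δ ^ 2 * s * (lam * normalMGF μ δ s) =
      δ ^ 2 * lam * s * exp (δ ^ 2 * s ^ 2 / 2 + μ * s) := by
    rw [normalMGF]
    ring
  rw [hsplit, log_mul (by positivity) (exp_pos _).ne', log_mul (by positivity) hs.ne', log_exp,
    Pi.add_apply]
  ring

end Merton

/-- Short-time / large-strike blowup of the Merton saddle point local-variance
approximation: `Λ(x) = 2m(ŝ(x))/(ŝ(x)(ŝ(x)−1))` satisfies
`Λ(x)·(log x)^{3/2}/x → δ/√2` as `x → +∞`; in particular, for fixed `k > 0`,
`Λ(k/T) ∼ (δ/√2)·(k/T)·(log(k/T))^{−3/2}` as `T → 0⁺`. -/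
theorem merton_local_vol_blowup
    (σ b lam μ δ : ℝ) (hσ : 0 < σ) (hlam : 0 < lam) (hδ : 0 < δ)
    (m : ℝ → ℝ)
    (hm : ∀ s : ℝ,
      m s = σ ^ 2 / 2 * s ^ 2 + b * s + lam * (Real.exp (δ ^ 2 * s ^ 2 / 2 + μ * s) - 1))
    (sHat : ℝ → ℝ)
    (hsolve : ∀ x : ℝ, deriv m (sHat x) = x)
    (huniq : ∀ x s : ℝ, deriv m s = x → s = sHat x)
    (Λ : ℝ → ℝ)
    (hΛ : ∀ x : ℝ, Λ x = 2 * m (sHat x) / (sHat x * (sHat x - 1))) :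
    Tendsto (fun x : ℝ => Λ x * Real.log x ^ ((3 : ℝ) / 2) / x)
      atTop (nhds (δ / Real.sqrt 2))
    ∧ ∀ k : ℝ, 0 < k →
        Tendsto
          (fun T : ℝ =>
            Λ (k / T) / (δ / Real.sqrt 2 * (k / T) * Real.log (k / T) ^ (-(3 : ℝ) / 2)))
          (nhdsWithin 0 (Set.Ioi 0)) (nhds 1) := by
  obtain rfl : m = mertonCumulant σ b lam μ δ := funext hm
  obtain rfl : Λ = saddlePointLocalVar (mertonCumulant σ b lam μ δ) sHat := funext hΛ
  have hsHat : Tendsto sHat atTop atTop :=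
    tendsto_atTop_of_monotone_comp (monotone_deriv_mertonCumulant hlam.le)
      (tendsto_id.congr fun x => (hsolve x).symm)
  have hequiv : saddlePointLocalVar (mertonCumulant σ b lam μ δ) sHat ~[atTop]
      fun x => δ / √2 * x * log x ^ (-(3 : ℝ) / 2) := by
    rw [show δ / √2 = √(δ ^ 2 / 2) by rw [sqrt_div (sq_nonneg δ), sqrt_sq hδ.le]]
    refine isEquivalent_saddlePointLocalVar (by positivity)
      (isEquivalent_log_deriv_mertonCumulant hlam hδ.ne') ?_ (.of_forall hsolve) hsHat
    simpa only [mul_div_cancel₀ _ (two_ne_zero' ℝ)] using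
      isEquivalent_mertonCumulant_deriv_div hlam.ne' hδ.ne'
  have hc : δ / √2 ≠ 0 := by positivity
  exact ⟨tendsto_mul_log_rpow_div_of_isEquivalent (by simpa only [neg_div] using hequiv),
    fun k hk => (tendsto_div_one_of_isEquivalent_mul_log_rpow hc hequiv).comp
      (tendsto_const_div_nhdsGT_zero hk)⟩
end

section
/- Fix σ > 0, λ > 0, p ∈ (0,1), λ₊ > 1 and λ₋ > 0, let m(s) := (σ²/2)s² + λ·( λ₊·p/(λ₊ − s) + λ₋·(1−p)/(λ₋ + s) ) on (−λ₋, λ₊), and for x ∈ ℝ let ŝ(x) ∈ (−λ₋, λ₊) denote the unique solution of m'(s) = x. Then (λ₊ − ŝ(x))·√x → √(λ·λ₊·p) as x → +∞; in particular ŝ(x) → λ₊ as x → +∞. -/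
open Filter

/-! Near its pole `λ₊`, the equation `m'(s) = x` reads `x = c / u² + g` with `u = λ₊ - s`,
`c = λλ₊p` and `g` the derivative of the remaining terms. Since `g` is bounded above on
`(-λ₋, λ₊)`, the term `c / u²` must absorb the growth of `x`, which forces `u → 0`. Then `g`
converges, so `u² x = c + u² g → c`, and taking square roots gives the rate. -/

section DoublePole

variable {ι : Type*} {l : Filter ι} {u x g : ι → ℝ} {c : ℝ}

theorem tendsto_div_sq_atTop_of_eq_div_sq_add (hx : Tendsto x l atTop)
    (heq : ∀ᶠ i in l, x i = c / u i ^ 2 + g i) (hg : l.IsBoundedUnder (· ≤ ·) g) :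
    Tendsto (fun i => c / u i ^ 2) l atTop :=
  Tendsto.atTop_of_add_isBoundedUnder_le hg (hx.congr' heq)

theorem tendsto_zero_of_tendsto_div_sq_atTop (h : Tendsto (fun i => c / u i ^ 2) l atTop) :
    Tendsto u l (nhds 0) := by
  have hsq : Tendsto (fun i => u i ^ 2) l (nhds 0) := by
    refine (h.const_div_atTop c).congr' ?_
    filter_upwards [h.eventually_ne_atTop 0] with i hi
    exact div_div_cancel₀ (div_ne_zero_iff.mp hi).1
  have habs : Tendsto (fun i => |u i|) l (nhds 0) := by
    simpa only [Real.sqrt_sq_eq_abs, Real.sqrt_zero] using hsq.sqrt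
  exact (tendsto_zero_iff_abs_tendsto_zero u).mpr habs

theorem tendsto_abs_mul_sqrt_of_eq_div_sq_add (hx : Tendsto x l atTop)
    (heq : ∀ᶠ i in l, x i = c / u i ^ 2 + g i) (hg : l.IsBoundedUnder (· ≤ ·) (|g ·|)) :
    Tendsto (fun i => |u i| * √(x i)) l (nhds √c) := by
  have hpole : Tendsto (fun i => c / u i ^ 2) l atTop :=
    tendsto_div_sq_atTop_of_eq_div_sq_add hx heq (isBoundedUnder_le_abs.mp hg).1
  have hsq : Tendsto (fun i => u i ^ 2) l (nhds 0) := by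
    simpa using (tendsto_zero_of_tendsto_div_sq_atTop hpole).pow 2
  have hlim : Tendsto (fun i => c + u i ^ 2 * g i) l (nhds c) := by
    simpa using (hsq.zero_mul_isBoundedUnder_le hg).const_add c
  refine hlim.sqrt.congr' ?_
  filter_upwards [heq, hpole.eventually_ne_atTop 0] with i hi hne
  have hu : u i ^ 2 ≠ 0 := (div_ne_zero_iff.mp hne).2
  rw [← Real.sqrt_sq_eq_abs, ← Real.sqrt_mul (sq_nonneg _), hi, mul_add, mul_div_cancel₀ c hu]

end DoublePole

section Kou

variable {σ lam p lamP lamM s : ℝ}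

/-- The exponent `m` in the moment generating function `exp (T * m s)` of the log-price in
Kou's model, with `lamP = λ₊` and `lamM = λ₋`; only its values on `(-λ₋, λ₊)` are meaningful. -/
noncomputable def kouExponent (σ lam p lamP lamM s : ℝ) : ℝ :=
  σ ^ 2 / 2 * s ^ 2 + lam * (lamP * p / (lamP - s) + lamM * (1 - p) / (lamM + s))

/-- The part of the derivative of `kouExponent` coming from the diffusion and the downward jumps,
which remains regular at the singularity `λ₊`. -/
noncomputable def kouRegularSlope (σ lam p lamM s : ℝ) : ℝ :=
  σ ^ 2 * s - lam * (lamM * (1 - p)) / (lamM + s) ^ 2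

theorem hasDerivAt_kouExponent (hP : lamP - s ≠ 0) (hM : lamM + s ≠ 0) :
    HasDerivAt (kouExponent σ lam p lamP lamM)
      (lam * lamP * p / (lamP - s) ^ 2 + kouRegularSlope σ lam p lamM s) s := by
  have hdiff : HasDerivAt (fun t => σ ^ 2 / 2 * t ^ 2) (σ ^ 2 / 2 * (2 * s)) s := by
    simpa using (hasDerivAt_pow 2 s).const_mul (σ ^ 2 / 2)
  have hup := (hasDerivAt_const s (lamP * p)).div ((hasDerivAt_id s).const_sub lamP) hP
  have hdown := (hasDerivAt_const s (lamM * (1 - p))).div ((hasDerivAt_id s).const_add lamM) hM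
  refine (hdiff.add ((hup.add hdown).const_mul lam)).congr_deriv ?_
  simp only [kouRegularSlope, id]
  ring

theorem kouRegularSlope_le (hlam : 0 ≤ lam) (hp : p ≤ 1) (hlamM : 0 ≤ lamM) (hs : s ≤ lamP) :
    kouRegularSlope σ lam p lamM s ≤ σ ^ 2 * lamP := by
  have hdown : 0 ≤ lam * (lamM * (1 - p)) / (lamM + s) ^ 2 := by
    have := sub_nonneg.mpr hp
    positivity
  calc
    kouRegularSlope σ lam p lamM s ≤ σ ^ 2 * s := sub_le_self _ hdown
    _ ≤ σ ^ 2 * lamP := by gcongr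

theorem continuousAt_kouRegularSlope (hM : lamM + s ≠ 0) :
    ContinuousAt (kouRegularSlope σ lam p lamM) s := by
  unfold kouRegularSlope
  fun_prop (disch := positivity)

theorem kou_saddle_point_asymptotics_general {sHat : ℝ → ℝ}
    (hlam : 0 ≤ lam) (hp : p ≤ 1) (hlamM : 0 ≤ lamM)
    (hmem : ∀ᶠ x in atTop, sHat x ∈ Set.Ioo (-lamM) lamP)
    (hsolve : ∀ᶠ x in atTop, deriv (kouExponent σ lam p lamP lamM) (sHat x) = x) :
    Tendsto (fun x => (lamP - sHat x) * √x) atTop (nhds √(lam * lamP * p)) ∧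
      Tendsto sHat atTop (nhds lamP) := by
  have hsaddle : ∀ᶠ x in atTop, x = lam * lamP * p / (lamP - sHat x) ^ 2 +
      kouRegularSlope σ lam p lamM (sHat x) := by
    filter_upwards [hmem, hsolve] with x hx hd
    rw [← (hasDerivAt_kouExponent (sub_pos.mpr hx.2).ne' (by linarith [hx.1])).deriv, hd]
  have hs : Tendsto sHat atTop (nhds lamP) := by
    have hbdd : atTop.IsBoundedUnder (· ≤ ·) fun x => kouRegularSlope σ lam p lamM (sHat x) :=
      isBoundedUnder_of_eventually_le <| hmem.mono fun _ hx =>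
        kouRegularSlope_le hlam hp hlamM hx.2.le
    simpa using (tendsto_zero_of_tendsto_div_sq_atTop
      (tendsto_div_sq_atTop_of_eq_div_sq_add tendsto_id hsaddle hbdd)).const_sub lamP
  have hne : lamM + lamP ≠ 0 := by
    obtain ⟨x, hx⟩ := hmem.exists
    linarith [hx.1, hx.2]
  have hslope := (continuousAt_kouRegularSlope (σ := σ) (lam := lam) (p := p) hne).tendsto.comp hs
  refine ⟨(tendsto_abs_mul_sqrt_of_eq_div_sq_add tendsto_id hsaddle
    hslope.abs.isBoundedUnder_le).congr' ?_, hs⟩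
  filter_upwards [hmem] with x hx
  rw [abs_of_pos (sub_pos.mpr hx.2), id]

end Kou

/-- The Kou saddle point `ŝ(x)` (the unique solution in `(−λ₋, λ₊)` of
`m'(s) = x`) converges to the singularity `λ₊` as `x → +∞`, with rate
`(λ₊ − ŝ(x))·√x → √(λλ₊p)`. -/
theorem kou_saddle_point_asymptotics
    (σ lam p lamP lamM : ℝ)
    (hσ : 0 < σ) (hlam : 0 < lam) (hp0 : 0 < p) (hp1 : p < 1)
    (hlamP : 1 < lamP) (hlamM : 0 < lamM)
    (m : ℝ → ℝ)
    (hm : ∀ s ∈ Set.Ioo (-lamM) lamP,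
      m s = σ ^ 2 / 2 * s ^ 2 + lam * (lamP * p / (lamP - s) + lamM * (1 - p) / (lamM + s)))
    (sHat : ℝ → ℝ)
    (hmem : ∀ x : ℝ, sHat x ∈ Set.Ioo (-lamM) lamP)
    (hsolve : ∀ x : ℝ, deriv m (sHat x) = x)
    (huniq : ∀ x s : ℝ, s ∈ Set.Ioo (-lamM) lamP → deriv m s = x → s = sHat x) :
    Tendsto (fun x : ℝ => (lamP - sHat x) * Real.sqrt x)
        atTop (nhds (Real.sqrt (lam * lamP * p)))
    ∧ Tendsto sHat atTop (nhds lamP) :=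
  kou_saddle_point_asymptotics_general hlam.le hp1.le hlamM.le (.of_forall hmem) <|
    .of_forall fun x => (Set.EqOn.deriv hm isOpen_Ioo (hmem x)).symm.trans (hsolve x)
end

section
/- Fix σ > 0 and λ > 0, let Φ and φ denote the standard normal cumulative distribution function and density, and for K, T > 0 set d₂(K,T) := ( log(1/K) + (λ − σ²/2)T ) / (σ√T), d₁(K,T) := d₂(K,T) + σ√T, and C(K,T) := Φ(d₁(K,T)) − K·e^{−λT}·Φ(d₂(K,T)). Then C is smooth on (0,∞) × (0,∞) with ∂_KK C(K,T) > 0, and Dupire's local variance satisfies the exact identity 2·∂_T C(K,T) / ( K²·∂_KK C(K,T) ) = σ² + 2λσ√T · Φ(d₂(K,T)) / φ(d₂(K,T)) for all K, T > 0. -/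
/-!
Merton's jump-to-ruin call price is the Black–Scholes price with the ruin intensity as interest
rate. The relation `S φ(d₁) = K e^{-rT} φ(d₂)` says that `d₂` is a critical point of
`d ↦ S Φ(d + σ√T) - K e^{-rT} Φ(d)`, so that in a first derivative of the call price the dependence
of `d₂` on `K` and `T` may be ignored. This gives `∂_K C = -e^{-rT} Φ(d₂)` and
`∂_T C = K e^{-rT} (σ φ(d₂) / (2√T) + r Φ(d₂))` at once, and differentiating the former in `K` gives
`∂_KK C = e^{-rT} φ(d₂) / (K σ √T)`.
-/

open Filter MeasureTheory ProbabilityTheory Real Set Topology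
open scoped ContDiff NNReal

section NormalDistribution

theorem hasDerivAt_setIntegral_Iic {E : Type*} [NormedAddCommGroup E] [NormedSpace ℝ E]
    [CompleteSpace E] {f : ℝ → E} {b x : ℝ} (hf : IntegrableOn f (Iic b)) (hxb : x < b)
    (hfx : ContinuousAt f x) : HasDerivAt (fun y => ∫ t in Iic y, f t) (f x) x := by
  have hsplit : (fun y => ∫ t in Iic y, f t) =ᶠ[𝓝 x]
      fun y => (∫ t in Iic x, f t) + ∫ t in x..y, f t := by
    filter_upwards [gt_mem_nhds hxb] with y hy
    rw [← intervalIntegral.integral_Iic_sub_Iic (hf.mono_set (Iic_subset_Iic.2 hxb.le))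
      (hf.mono_set (Iic_subset_Iic.2 hy.le)), add_sub_cancel]
  have hmeas : StronglyMeasurableAtFilter f (𝓝 x) :=
    ⟨Iic b, Iic_mem_nhds hxb, hf.aestronglyMeasurable⟩
  exact ((intervalIntegral.integral_hasDerivAt_right IntervalIntegrable.refl hmeas
    hfx).const_add _).congr_of_eventuallyEq hsplit

variable (m : ℝ) {v : ℝ≥0}

theorem contDiff_gaussianPDFReal (v : ℝ≥0) {n : ℕ∞ω} : ContDiff ℝ n (gaussianPDFReal m v) := by
  rw [gaussianPDFReal_def]
  fun_prop

theorem gaussianPDFReal_add_eq_mul_exp (v : ℝ≥0) (x y : ℝ) :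
    gaussianPDFReal m v (x + y) =
      gaussianPDFReal m v x * exp (-(2 * (x - m) * y + y ^ 2) / (2 * v)) := by
  rw [gaussianPDFReal, gaussianPDFReal, mul_assoc _ (exp _), ← exp_add]
  ring_nf

theorem cdf_gaussianReal_eq_integral (hv : v ≠ 0) (x : ℝ) :
    cdf (gaussianReal m v) x = ∫ t in Iic x, gaussianPDFReal m v t := by
  rw [cdf_eq_real, measureReal_def, gaussianReal_apply_eq_integral m hv, ENNReal.toReal_ofReal]
  exact integral_nonneg fun t => gaussianPDFReal_nonneg m v t

theorem hasDerivAt_cdf_gaussianReal (hv : v ≠ 0) (x : ℝ) :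
    HasDerivAt (cdf (gaussianReal m v)) (gaussianPDFReal m v x) x := by
  rw [funext (cdf_gaussianReal_eq_integral m hv)]
  exact hasDerivAt_setIntegral_Iic (integrable_gaussianPDFReal m v).integrableOn (lt_add_one x)
    (contDiff_gaussianPDFReal m v (n := 0)).continuous.continuousAt

theorem contDiff_cdf_gaussianReal (hv : v ≠ 0) : ContDiff ℝ ∞ (cdf (gaussianReal m v)) := by
  have hderiv := hasDerivAt_cdf_gaussianReal m hv
  rw [contDiff_infty_iff_deriv, funext fun x => (hderiv x).deriv]
  exact ⟨fun x => (hderiv x).differentiableAt, contDiff_gaussianPDFReal m v⟩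

theorem gaussianPDFReal_zero_one (x : ℝ) :
    gaussianPDFReal 0 1 x = exp (-x ^ 2 / 2) / √(2 * π) := by
  simp [gaussianPDFReal, div_eq_inv_mul]

end NormalDistribution

/-- The Black–Scholes quantity `d₂` for spot `S`, volatility `σ`, interest rate `r`, strike `K` and
maturity `T`. -/
noncomputable def blackScholesD₂ (S σ r K T : ℝ) : ℝ :=
  (log (S / K) + (r - σ ^ 2 / 2) * T) / (σ * √T)

/-- The Black–Scholes quantity `d₁`, written as the shift of `d₂` by the total volatility `σ√T`. -/
noncomputable def blackScholesD₁ (S σ r K T : ℝ) : ℝ :=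
  blackScholesD₂ S σ r K T + σ * √T

/-- The Black–Scholes price of a call with strike `K` and maturity `T`. With `r` the intensity of
ruin, this is the call price at zero interest rate in Merton's jump-to-ruin model. -/
noncomputable def blackScholesCall (S σ r K T : ℝ) : ℝ :=
  S * cdf (gaussianReal 0 1) (blackScholesD₁ S σ r K T) -
    K * exp (-r * T) * cdf (gaussianReal 0 1) (blackScholesD₂ S σ r K T)

/-- The Dupire local variance of a call price surface `C(K, T)` at zero interest rate, hence without
the drift term. -/
noncomputable def dupireLocalVariance (C : ℝ → ℝ → ℝ) (K T : ℝ) : ℝ :=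
  2 * deriv (fun t => C K t) T / (K ^ 2 * deriv (deriv (fun k => C k T)) K)

section BlackScholes

local notation "Φ" => cdf (gaussianReal 0 1)
local notation "φ" => gaussianPDFReal 0 1
local notation "d₁" => blackScholesD₁
local notation "d₂" => blackScholesD₂

variable {S σ K T : ℝ} (r : ℝ)

theorem mul_gaussianPDFReal_blackScholesD₁ (hS : 0 < S) (hσ : σ ≠ 0) (hK : 0 < K) (hT : 0 < T) :
    S * φ (d₁ S σ r K T) = K * exp (-r * T) * φ (d₂ S σ r K T) := by
  have hd₂ : d₂ S σ r K T * (σ * √T) = log (S / K) + (r - σ ^ 2 / 2) * T :=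
    div_mul_cancel₀ _ (mul_ne_zero hσ (sqrt_pos.2 hT).ne')
  have hexponent : -(2 * (d₂ S σ r K T - 0) * (σ * √T) + (σ * √T) ^ 2) / (2 * (1 : ℝ≥0)) =
      -log (S / K) + -r * T := by
    rw [NNReal.coe_one]
    linear_combination -hd₂ - σ ^ 2 / 2 * sq_sqrt hT.le
  rw [blackScholesD₁, gaussianPDFReal_add_eq_mul_exp, hexponent, exp_add, exp_neg,
    exp_log (div_pos hS hK)]
  field_simp

theorem contDiffAt_blackScholesD₂ {n : ℕ∞ω} (hS : S ≠ 0) (hσ : σ ≠ 0) (hK : K ≠ 0) (hT : 0 < T) :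
    ContDiffAt ℝ n (fun q : ℝ × ℝ => d₂ S σ r q.1 q.2) (K, T) :=
  (((contDiffAt_const.div contDiffAt_fst hK).log (div_ne_zero hS hK)).add
    (contDiffAt_const.mul contDiffAt_snd)).div
    (contDiffAt_const.mul (contDiffAt_snd.sqrt hT.ne')) (mul_ne_zero hσ (sqrt_pos.2 hT).ne')

theorem contDiffAt_blackScholesCall (hS : S ≠ 0) (hσ : σ ≠ 0) (hK : K ≠ 0) (hT : 0 < T) :
    ContDiffAt ℝ ∞ (fun q : ℝ × ℝ => blackScholesCall S σ r q.1 q.2) (K, T) := by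
  have hΦ : ContDiff ℝ ∞ Φ := contDiff_cdf_gaussianReal 0 one_ne_zero
  have hd₂ := contDiffAt_blackScholesD₂ (n := ∞) r hS hσ hK hT
  have hd₁ : ContDiffAt ℝ ∞ (fun q : ℝ × ℝ => d₁ S σ r q.1 q.2) (K, T) :=
    hd₂.add (contDiffAt_const.mul (contDiffAt_snd.sqrt hT.ne'))
  have hdiscount : ContDiffAt ℝ ∞ (fun q : ℝ × ℝ => q.1 * exp (-r * q.2)) (K, T) := by fun_prop
  exact (contDiffAt_const.mul (hΦ.contDiffAt.comp _ hd₁)).sub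
    (hdiscount.mul (hΦ.contDiffAt.comp _ hd₂))

theorem hasDerivAt_blackScholesCall_comp {k t : ℝ → ℝ} {k' t' u : ℝ} (hS : 0 < S) (hσ : σ ≠ 0)
    (hku : 0 < k u) (htu : 0 < t u) (hk : HasDerivAt k k' u) (ht : HasDerivAt t t' u) :
    HasDerivAt (fun w => blackScholesCall S σ r (k w) (t w))
      (-(exp (-r * t u) * Φ (d₂ S σ r (k u) (t u))) * k' +
        k u * exp (-r * t u) * (σ / (2 * √(t u)) * φ (d₂ S σ r (k u) (t u)) +
          r * Φ (d₂ S σ r (k u) (t u))) * t') u := by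
  have hΦ : ∀ x, HasDerivAt Φ (φ x) x := hasDerivAt_cdf_gaussianReal 0 one_ne_zero
  have hdiff : DifferentiableAt ℝ (fun q : ℝ × ℝ => d₂ S σ r q.1 q.2) (k u, t u) :=
    (contDiffAt_blackScholesD₂ (n := 1) r hS.ne' hσ hku.ne' htu).differentiableAt one_ne_zero
  obtain ⟨d', hd₂⟩ : ∃ d', HasDerivAt (fun w => d₂ S σ r (k w) (t w)) d' u :=
    ⟨_, (hdiff.hasFDerivAt.comp_hasDerivAt u (hk.prodMk ht) :)⟩
  have hd₁ : HasDerivAt (fun w => d₁ S σ r (k w) (t w)) (d' + σ * (t' / (2 * √(t u)))) u :=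
    hd₂.add ((ht.sqrt htu.ne').const_mul σ)
  have hcall := (((hΦ _).comp u hd₁).const_mul S).sub
    ((hk.mul (ht.const_mul (-r)).exp).mul ((hΦ _).comp u hd₂))
  refine hcall.congr_deriv ?_
  simp only [Function.comp_apply, Pi.mul_apply]
  -- The coefficient of `d'` is `S φ(d₁) - K e^{-rT} φ(d₂) = 0`.
  linear_combination (d' + σ * (t' / (2 * √(t u)))) *
    mul_gaussianPDFReal_blackScholesD₁ r hS hσ hku htu

theorem hasDerivAt_blackScholesCall_strike (hS : 0 < S) (hσ : σ ≠ 0) (hK : 0 < K) (hT : 0 < T) :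
    HasDerivAt (fun k => blackScholesCall S σ r k T) (-(exp (-r * T) * Φ (d₂ S σ r K T))) K := by
  simpa using hasDerivAt_blackScholesCall_comp r hS hσ hK hT (hasDerivAt_id K)
    (hasDerivAt_const K T)

theorem hasDerivAt_blackScholesCall_maturity (hS : 0 < S) (hσ : σ ≠ 0) (hK : 0 < K) (hT : 0 < T) :
    HasDerivAt (fun t => blackScholesCall S σ r K t)
      (K * exp (-r * T) * (σ / (2 * √T) * φ (d₂ S σ r K T) + r * Φ (d₂ S σ r K T))) T := by
  simpa using hasDerivAt_blackScholesCall_comp r hS hσ hK hT (hasDerivAt_const T K)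
    (hasDerivAt_id T)

theorem hasDerivAt_blackScholesD₂_strike (σ T : ℝ) (hS : S ≠ 0) (hK : K ≠ 0) :
    HasDerivAt (fun k => d₂ S σ r k T) (-(K * (σ * √T))⁻¹) K := by
  have hlog : HasDerivAt (fun k => log (S / k)) (-K⁻¹) K := by
    refine (((hasDerivAt_const K S).div (hasDerivAt_id K) hK).log
      (div_ne_zero hS hK)).congr_deriv ?_
    simp only [id, Pi.div_apply]
    field_simp
    ring
  refine ((hlog.add_const _).div_const _).congr_deriv ?_
  rw [mul_inv, neg_div, div_eq_mul_inv]

theorem deriv_deriv_blackScholesCall_strike (hS : 0 < S) (hσ : σ ≠ 0) (hK : 0 < K) (hT : 0 < T) :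
    deriv (deriv (fun k => blackScholesCall S σ r k T)) K =
      exp (-r * T) * φ (d₂ S σ r K T) / (K * (σ * √T)) := by
  have hderiv : deriv (fun k => blackScholesCall S σ r k T) =ᶠ[𝓝 K]
      fun k => -(exp (-r * T) * Φ (d₂ S σ r k T)) := by
    filter_upwards [lt_mem_nhds hK] with k hk
    exact (hasDerivAt_blackScholesCall_strike r hS hσ hk hT).deriv
  have hΦd₂ := (hasDerivAt_cdf_gaussianReal 0 one_ne_zero (d₂ S σ r K T)).comp K
    (hasDerivAt_blackScholesD₂_strike r σ T hS.ne' hK.ne')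
  rw [hderiv.deriv_eq]
  refine ((hΦd₂.const_mul (exp (-r * T))).neg.congr_deriv ?_).deriv
  ring

theorem dupireLocalVariance_blackScholesCall (hS : 0 < S) (hσ : σ ≠ 0) (hK : 0 < K) (hT : 0 < T) :
    dupireLocalVariance (blackScholesCall S σ r) K T =
      σ ^ 2 + 2 * r * σ * √T * Φ (d₂ S σ r K T) / φ (d₂ S σ r K T) := by
  have hφ := gaussianPDFReal_pos 0 1 (d₂ S σ r K T) one_ne_zero
  rw [dupireLocalVariance, (hasDerivAt_blackScholesCall_maturity r hS hσ hK hT).deriv,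
    deriv_deriv_blackScholesCall_strike r hS hσ hK hT]
  field_simp

theorem jump_to_ruin_dupire_identity_general (hS : 0 < S) (hσ : 0 < σ) :
    ContDiffOn ℝ ∞ (fun q : ℝ × ℝ => blackScholesCall S σ r q.1 q.2) (Ioi 0 ×ˢ Ioi 0) ∧
      ∀ K T : ℝ, 0 < K → 0 < T →
        0 < deriv (deriv (fun k => blackScholesCall S σ r k T)) K ∧
          dupireLocalVariance (blackScholesCall S σ r) K T =
            σ ^ 2 + 2 * r * σ * √T * Φ (d₂ S σ r K T) / φ (d₂ S σ r K T) := by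
  refine ⟨fun q ⟨hK, hT⟩ =>
    (contDiffAt_blackScholesCall r hS.ne' hσ.ne' (ne_of_gt hK) hT).contDiffWithinAt,
    fun K T hK hT => ⟨?_, dupireLocalVariance_blackScholesCall r hS hσ.ne' hK hT⟩⟩
  have hφ := gaussianPDFReal_pos 0 1 (d₂ S σ r K T) one_ne_zero
  rw [deriv_deriv_blackScholesCall_strike r hS hσ.ne' hK hT]
  positivity

end BlackScholes

/-- Dupire local variance of Merton's jump-to-ruin model: the call surface
`C(K,T) = Φ(d₁(K,T)) − K·e^{−λT}·Φ(d₂(K,T))` is smooth on `(0,∞) × (0,∞)` with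
`∂_KK C > 0`, and `2∂_T C/(K²∂_KK C) = σ² + 2λσ√T·Φ(d₂)/φ(d₂)`. -/
theorem jump_to_ruin_dupire_identity
    (σ lam : ℝ) (hσ : 0 < σ) (hlam : 0 < lam)
    (Φ φ : ℝ → ℝ)
    (hΦ : ∀ x : ℝ, Φ x = ∫ t in Set.Iic x, Real.exp (-t ^ 2 / 2) / Real.sqrt (2 * Real.pi))
    (hφ : ∀ x : ℝ, φ x = Real.exp (-x ^ 2 / 2) / Real.sqrt (2 * Real.pi))
    (d₂ d₁ : ℝ → ℝ → ℝ)
    (hd₂ : ∀ K T : ℝ,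
      d₂ K T = (Real.log (1 / K) + (lam - σ ^ 2 / 2) * T) / (σ * Real.sqrt T))
    (hd₁ : ∀ K T : ℝ, d₁ K T = d₂ K T + σ * Real.sqrt T)
    (C : ℝ → ℝ → ℝ)
    (hC : ∀ K T : ℝ, C K T = Φ (d₁ K T) - K * Real.exp (-lam * T) * Φ (d₂ K T)) :
    ContDiffOn ℝ (⊤ : ℕ∞) (fun q : ℝ × ℝ => C q.1 q.2) (Set.Ioi 0 ×ˢ Set.Ioi 0)
    ∧ ∀ K T : ℝ, 0 < K → 0 < T →
        0 < deriv (deriv (fun k => C k T)) K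
        ∧ 2 * deriv (fun t => C K t) T / (K ^ 2 * deriv (deriv (fun k => C k T)) K)
            = σ ^ 2 + 2 * lam * σ * Real.sqrt T * Φ (d₂ K T) / φ (d₂ K T) := by
  obtain rfl : φ = gaussianPDFReal 0 1 := funext fun x => by rw [hφ, gaussianPDFReal_zero_one]
  obtain rfl : Φ = cdf (gaussianReal 0 1) := funext fun x => by
    simp only [hΦ, cdf_gaussianReal_eq_integral 0 one_ne_zero, gaussianPDFReal_zero_one]
  obtain rfl : d₂ = blackScholesD₂ 1 σ lam := funext₂ hd₂
  obtain rfl : d₁ = blackScholesD₁ 1 σ lam := funext₂ hd₁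
  obtain rfl : C = blackScholesCall 1 σ lam := funext₂ fun K T => by
    rw [hC, blackScholesCall, one_mul]
  exact jump_to_ruin_dupire_identity_general lam one_pos hσ
end

section
/- Fix σ > 0 and λ > 0, let Φ and φ denote the standard normal cumulative distribution function and density, and for K, T > 0 set d₂(K,T) := ( log(1/K) + (λ − σ²/2)T ) / (σ√T) and σ²_loc(K,T) := σ² + 2λσ√T · Φ(d₂(K,T)) / φ(d₂(K,T)). Then for every fixed K > 1, σ²_loc(K,T) → σ² as T → 0⁺. -/
open Filter

/-!
Log-concavity of the standard normal density `φ` makes `Φ / φ` monotone, hence bounded on every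
left half-line. For `K ≥ 1` the term `log (1 / K) / (σ √T)` of `d₂` is nonpositive and the
remaining drift term is a multiple of `√T`, so `d₂` stays bounded above as `T → 0⁺`. The correction
`2 λ σ √T Φ(d₂) / φ(d₂)` is therefore `O(√T)`.
-/

open MeasureTheory ProbabilityTheory Set Topology
open scoped NNReal

lemma add_le_add_of_concaveOn {𝕜 : Type*} [Field 𝕜] [LinearOrder 𝕜] [IsStrictOrderedRing 𝕜]
    {s : Set 𝕜} {f : 𝕜 → 𝕜} (hf : ConcaveOn 𝕜 s f) {a b c d : 𝕜} (ha : a ∈ s) (hd : d ∈ s)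
    (hab : a ≤ b) (hbd : b ≤ d) (h : b + c = a + d) : f a + f d ≤ f b + f c := by
  obtain rfl | had := (hab.trans hbd).eq_or_lt
  · obtain rfl : a = b := le_antisymm hab hbd
    obtain rfl : c = a := add_left_cancel h
    exact le_rfl
  have hda : 0 < d - a := sub_pos.2 had
  set p := (d - b) / (d - a) with hp
  set q := (b - a) / (d - a) with hq
  have hp0 : 0 ≤ p := div_nonneg (sub_nonneg.2 hbd) hda.le
  have hq0 : 0 ≤ q := div_nonneg (sub_nonneg.2 hab) hda.le
  have hpq : p + q = 1 := by rw [hp, hq]; field_simp; ring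
  have hb : p * a + q * d = b := by rw [hp, hq]; field_simp; ring
  have hc : q * a + p * d = c := by linear_combination (a + d) * hpq - hb - h
  have hfb : p * f a + q * f d ≤ f b := by
    simpa only [smul_eq_mul, hb] using hf.2 ha hd hp0 hq0 hpq
  have hfc : q * f a + p * f d ≤ f c := by
    simpa only [smul_eq_mul, hc] using hf.2 ha hd hq0 hp0 (by rwa [add_comm])
  calc f a + f d = (p * f a + q * f d) + (q * f a + p * f d) := by
        linear_combination -(f a + f d) * hpq
    _ ≤ f b + f c := add_le_add hfb hfc

lemma mul_le_mul_of_concaveOn_log {f : ℝ → ℝ} (hpos : ∀ x, 0 < f x)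
    (hf : ConcaveOn ℝ univ fun x ↦ Real.log (f x)) {a b c d : ℝ}
    (hab : a ≤ b) (hbd : b ≤ d) (h : b + c = a + d) : f a * f d ≤ f b * f c := by
  have hlog := add_le_add_of_concaveOn hf (mem_univ a) (mem_univ d) hab hbd h
  rwa [← Real.log_mul (hpos a).ne' (hpos d).ne', ← Real.log_mul (hpos b).ne' (hpos c).ne',
    Real.log_le_log_iff (mul_pos (hpos a) (hpos d)) (mul_pos (hpos b) (hpos c))] at hlog

lemma gaussianPDFReal_zero_one_apply (x : ℝ) :
    gaussianPDFReal 0 1 x = Real.exp (-x ^ 2 / 2) / √(2 * Real.pi) := by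
  simp [gaussianPDFReal, div_eq_inv_mul]

lemma concaveOn_log_gaussianPDFReal (μ : ℝ) {v : ℝ≥0} (hv : v ≠ 0) :
    ConcaveOn ℝ univ fun x ↦ Real.log (gaussianPDFReal μ v x) := by
  have hlog (x : ℝ) : Real.log (gaussianPDFReal μ v x) =
      -(2 * (v : ℝ))⁻¹ * (x - μ) ^ 2 + Real.log (√(2 * Real.pi * v))⁻¹ := by
    rw [gaussianPDFReal, Real.log_mul (by positivity) (Real.exp_ne_zero _), Real.log_exp]
    ring
  have hsq : ConvexOn ℝ univ fun x : ℝ ↦ (x - μ) ^ 2 := by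
    simpa [Function.comp_def, ← sub_eq_add_neg] using
      (even_two.convexOn_pow (𝕜 := ℝ)).translate_left (-μ)
  have hconc : ConcaveOn ℝ univ fun x ↦ -((2 * (v : ℝ))⁻¹ * (x - μ) ^ 2) :=
    (hsq.smul (c := (2 * (v : ℝ))⁻¹) (by positivity)).neg
  simp only [hlog, neg_mul]
  exact hconc.add_const (Real.log (√(2 * Real.pi * v))⁻¹)

/-- The Mills ratio of a density `f` for its lower tail, i.e. the reciprocal of the reversed hazard
rate: the distribution function `∫ t in Iic x, f t` divided by `f x`. -/
noncomputable def lowerMillsRatio (f : ℝ → ℝ) (x : ℝ) : ℝ :=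
  (∫ t in Iic x, f t) / f x

lemma lowerMillsRatio_nonneg {f : ℝ → ℝ} (hf : ∀ x, 0 ≤ f x) (x : ℝ) :
    0 ≤ lowerMillsRatio f x :=
  div_nonneg (integral_nonneg hf) (hf x)

lemma setIntegral_Iic_comp_add_right {E : Type*} [NormedAddCommGroup E] [NormedSpace ℝ E]
    (f : ℝ → E) (x c : ℝ) : ∫ t in Iic x, f (t + c) = ∫ t in Iic (x + c), f t := by
  have h := (measurePreserving_add_right volume c).setIntegral_preimage_emb
    (measurableEmbedding_addRight c) f (Iic (x + c))
  rwa [preimage_add_const_Iic, add_sub_cancel_right] at h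

lemma integrableOn_Iic_comp_add_right {E : Type*} [NormedAddCommGroup E] {f : ℝ → E} {x c : ℝ}
    (hf : IntegrableOn f (Iic (x + c))) : IntegrableOn (fun t ↦ f (t + c)) (Iic x) := by
  have h := ((measurePreserving_add_right volume c).integrableOn_comp_preimage
    (measurableEmbedding_addRight c)).2 hf
  rwa [preimage_add_const_Iic, add_sub_cancel_right] at h

lemma monotone_lowerMillsRatio {f : ℝ → ℝ} (hpos : ∀ x, 0 < f x)
    (hf : ConcaveOn ℝ univ fun x ↦ Real.log (f x)) (hint : ∀ x, IntegrableOn f (Iic x)) :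
    Monotone (lowerMillsRatio f) := by
  intro x y hxy
  have hint_shift : IntegrableOn (fun t ↦ f (t + (y - x))) (Iic x) :=
    integrableOn_Iic_comp_add_right (hint _)
  have hmul : ∀ t ∈ Iic x, f t * f y ≤ f (t + (y - x)) * f x := fun t ht ↦
    mul_le_mul_of_concaveOn_log hpos hf (by linarith) (by linarith [mem_Iic.1 ht]) (by ring)
  refine (div_le_div_iff₀ (hpos x) (hpos y)).2 ?_
  calc (∫ t in Iic x, f t) * f y = ∫ t in Iic x, f t * f y := (integral_mul_const _ _).symm
    _ ≤ ∫ t in Iic x, f (t + (y - x)) * f x :=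
        setIntegral_mono_on ((hint x).mul_const _) (hint_shift.mul_const _) measurableSet_Iic hmul
    _ = (∫ t in Iic x, f (t + (y - x))) * f x := integral_mul_const _ _
    _ = (∫ t in Iic y, f t) * f x := by
        rw [setIntegral_Iic_comp_add_right, add_sub_cancel]

lemma monotone_lowerMillsRatio_gaussianPDFReal (μ : ℝ) {v : ℝ≥0} (hv : v ≠ 0) :
    Monotone (lowerMillsRatio (gaussianPDFReal μ v)) :=
  monotone_lowerMillsRatio (fun x ↦ gaussianPDFReal_pos μ v x hv)
    (concaveOn_log_gaussianPDFReal μ hv) fun _ ↦ (integrable_gaussianPDFReal μ v).integrableOn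

/-- The Black–Scholes quantity `d₂(K, T)` for spot `1` and drift `lam`, the growth rate of the
underlying before ruin. -/
noncomputable def jumpToRuinD₂ (σ lam K T : ℝ) : ℝ :=
  (Real.log (1 / K) + (lam - σ ^ 2 / 2) * T) / (σ * √T)

/-- The Dupire local variance `σ²_loc(K, T)` of Merton's jump-to-ruin model with volatility `σ` and
default intensity `lam`, with `Φ / φ` expressed as the lower Mills ratio of the standard normal
density. -/
noncomputable def jumpToRuinLocalVariance (σ lam K T : ℝ) : ℝ :=
  σ ^ 2 + 2 * lam * σ * √T * lowerMillsRatio (gaussianPDFReal 0 1) (jumpToRuinD₂ σ lam K T)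

lemma jumpToRuinD₂_le {σ K : ℝ} (hσ : 0 ≤ σ) (hK : 1 ≤ K) (lam T : ℝ) :
    jumpToRuinD₂ σ lam K T ≤ (lam - σ ^ 2 / 2) / σ * √T := by
  have hlog : Real.log (1 / K) ≤ 0 := by
    rw [one_div, Real.log_inv]
    exact neg_nonpos.2 (Real.log_nonneg hK)
  calc jumpToRuinD₂ σ lam K T ≤ (lam - σ ^ 2 / 2) * T / (σ * √T) := by
        unfold jumpToRuinD₂
        gcongr
        linarith
    _ = (lam - σ ^ 2 / 2) / σ * √T := by rw [mul_div_mul_comm, Real.div_sqrt]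

lemma tendsto_sqrt_nhdsGT_zero : Tendsto Real.sqrt (𝓝[>] 0) (𝓝 0) := by
  simpa using (Real.continuous_sqrt.tendsto 0).mono_left nhdsWithin_le_nhds

lemma eventually_jumpToRuinD₂_le_one {σ K : ℝ} (hσ : 0 ≤ σ) (hK : 1 ≤ K) (lam : ℝ) :
    ∀ᶠ T in 𝓝[>] 0, jumpToRuinD₂ σ lam K T ≤ 1 := by
  have hbound : Tendsto (fun T ↦ (lam - σ ^ 2 / 2) / σ * √T) (𝓝[>] 0) (𝓝 0) := by
    simpa using tendsto_sqrt_nhdsGT_zero.const_mul ((lam - σ ^ 2 / 2) / σ)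
  filter_upwards [hbound.eventually_le_const one_pos] with T hT
  exact (jumpToRuinD₂_le hσ hK lam T).trans hT

theorem jump_to_ruin_local_vol_otm_limit_general {σ K : ℝ} (hσ : 0 < σ) (hK : 1 ≤ K) (lam : ℝ) :
    Tendsto (jumpToRuinLocalVariance σ lam K) (𝓝[>] 0) (𝓝 (σ ^ 2)) := by
  have hbounded : IsBoundedUnder (· ≤ ·) (𝓝[>] 0) (norm ∘ fun T ↦
      lowerMillsRatio (gaussianPDFReal 0 1) (jumpToRuinD₂ σ lam K T)) := by
    refine isBoundedUnder_of_eventually_le (a := lowerMillsRatio (gaussianPDFReal 0 1) 1) ?_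
    filter_upwards [eventually_jumpToRuinD₂_le_one hσ.le hK lam] with T hT
    rw [Function.comp_apply, Real.norm_of_nonneg
      (lowerMillsRatio_nonneg (gaussianPDFReal_nonneg 0 1) _)]
    exact monotone_lowerMillsRatio_gaussianPDFReal 0 one_ne_zero hT
  have hcoeff : Tendsto (fun T ↦ 2 * lam * σ * √T) (𝓝[>] 0) (𝓝 0) := by
    simpa using tendsto_sqrt_nhdsGT_zero.const_mul (2 * lam * σ)
  have hsum := (hcoeff.zero_mul_isBoundedUnder_le hbounded).const_add (σ ^ 2)
  rw [add_zero] at hsum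
  exact hsum

/-- Out of the money (`K > 1`), the jump-to-ruin local variance
`σ²_loc(K,T) = σ² + 2λσ√T·Φ(d₂(K,T))/φ(d₂(K,T))` converges to `σ²` as `T → 0⁺`. -/
theorem jump_to_ruin_local_vol_otm_limit
    (σ lam : ℝ) (hσ : 0 < σ) (hlam : 0 < lam)
    (Φ φ : ℝ → ℝ)
    (hΦ : ∀ x : ℝ, Φ x = ∫ t in Set.Iic x, Real.exp (-t ^ 2 / 2) / Real.sqrt (2 * Real.pi))
    (hφ : ∀ x : ℝ, φ x = Real.exp (-x ^ 2 / 2) / Real.sqrt (2 * Real.pi))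
    (d₂ : ℝ → ℝ → ℝ)
    (hd₂ : ∀ K T : ℝ,
      d₂ K T = (Real.log (1 / K) + (lam - σ ^ 2 / 2) * T) / (σ * Real.sqrt T))
    (σloc2 : ℝ → ℝ → ℝ)
    (hσloc2 : ∀ K T : ℝ,
      σloc2 K T = σ ^ 2 + 2 * lam * σ * Real.sqrt T * Φ (d₂ K T) / φ (d₂ K T))
    (K : ℝ) (hK : 1 < K) :
    Tendsto (fun T : ℝ => σloc2 K T) (nhdsWithin 0 (Set.Ioi 0)) (nhds (σ ^ 2)) := by
  have hpdf : φ = gaussianPDFReal 0 1 :=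
    funext fun x ↦ (hφ x).trans (gaussianPDFReal_zero_one_apply x).symm
  have hcdf (x : ℝ) : Φ x = ∫ t in Iic x, gaussianPDFReal 0 1 t := by
    simp only [hΦ, gaussianPDFReal_zero_one_apply]
  have hlocal : σloc2 K = jumpToRuinLocalVariance σ lam K := by
    funext T
    rw [hσloc2, hcdf, hpdf, hd₂, mul_div_assoc]
    rfl
  rw [hlocal]
  exact jump_to_ruin_local_vol_otm_limit_general hσ hK.le lam
end
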